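/- arXiv:2310.02993 — 2 statements merged into one kernel-verified Lean document; each statement's English description precedes it below -/
import Mathlib

section
/- Let G = (V, E) be a finite arborescence, a : V → ℝ^D, M = (μ₁, …, μ_k) fixed centroids, and λ_f, λ_b ≥ 0. For v ∈ V and 1 ≤ i ≤ k, define c[v, i] as the minimum of q(𝒮, M | λ_f, λ_b) over all ordered k-partitions 𝒮 of the vertices of the subtree G_v such that v ∈ S_i; define ℓ[v, i] = min_{j < i} c[v, j] (with ℓ[v, 1] = ∞) and u[v, i] = min_{j > i} c[v, j] (with u[v, k] = ∞). Then for every v ∈ V and every i ∈ {1, …, k}: c[v, i] = ‖a(v) − μ_i‖₂² + ∑_{w : (v, w) ∈ E} min( c[w, i], λ_f + u[w, i], λ_b + ℓ[w, i] ). -/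
/-!
A `k`-partition of `G_v` is the same as a labelling of its vertices by `Fin k`, and the cost of a
labelling `f` is a sum of vertex terms `‖a x - μ (f x)‖²` and of edge terms
`pen (f (p x)) (f x)`, one for each edge `(p x, x)` with `x ≠ v` in `G_v` (`qCost_eq_labCost`).
Since `G_v` is the disjoint union of `{v}` and the subtrees of the children of `v`, this cost
splits as the vertex term of `v` plus, for each child `w`, the penalty of the edge `(v, w)` and the
cost of `f` on `G_w` (`labCost_split`). The labellings of the different `G_w` can be chosen
independently (`exists_glue`), so the minimum of the sum is the sum of the minima; the summand
at `w`, minimised over the label of `w`, is the three-way minimum of the recurrence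
(`step_le`, `exists_step`). Labellings being finite in number, every `c[v, i]` is attained
and finite; an entry `u` or `ℓ` over an empty index range is `⊤` and does not affect the minimum.
-/


open Finset

/-- The cost `q(𝒮, M | λ_f, λ_b)` of an ordered `k`-partition `S` with centroids `μ`,
with respect to the directed edge set `E` and feature map `a`. -/
noncomputable def qCost {V : Type*} [DecidableEq V] {D k : ℕ}
    (E : Finset (V × V)) (a : V → EuclideanSpace ℝ (Fin D))
    (S : Fin k → Finset V) (μ : Fin k → EuclideanSpace ℝ (Fin D))
    (lf lb : ℝ) : ℝ :=
  (∑ i : Fin k, ∑ v ∈ S i, ‖a v - μ i‖ ^ 2) +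
  ∑ i : Fin k, ∑ j : Fin k,
    if i < j then
      lf * ((E.filter (fun e => e.1 ∈ S i ∧ e.2 ∈ S j)).card : ℝ) +
      lb * ((E.filter (fun e => e.1 ∈ S j ∧ e.2 ∈ S i)).card : ℝ)
    else 0

/-- The edges of the arborescence with root `r` and parent map `p`. -/
def treeEdges {V : Type*} [Fintype V] [DecidableEq V] (r : V) (p : V → V) :
    Finset (V × V) :=
  (Finset.univ.filter (fun w => w ≠ r)).image (fun w => (p w, w))

open scoped Classical in
/-- The vertices of the subtree `G_v`: `v` together with all of its descendants. -/
noncomputable def subtree {V : Type*} [Fintype V] (p : V → V) (v : V) : Finset V :=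
  Finset.univ.filter (fun w => ∃ n : ℕ, p^[n] w = v)

/-- The edges of the subtree `G_v`. -/
noncomputable def subtreeEdges {V : Type*} [Fintype V] [DecidableEq V]
    (r : V) (p : V → V) (v : V) : Finset (V × V) :=
  (treeEdges r p).filter (fun e => e.1 ∈ subtree p v ∧ e.2 ∈ subtree p v)

/-- The children of a vertex `v` in the arborescence. -/
def children {V : Type*} [Fintype V] [DecidableEq V] (r : V) (p : V → V) (v : V) :
    Finset V :=
  Finset.univ.filter (fun w => w ≠ r ∧ p w = v)

/-- `c[v, i]`: the minimum of `q(𝒮, M | λ_f, λ_b)` over all ordered `k`-partitions `𝒮` of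
the vertices of the subtree `G_v` with `v ∈ S_i` (as an extended real, `∞` if none). -/
noncomputable def cVal {V : Type*} [Fintype V] [DecidableEq V] {D k : ℕ}
    (r : V) (p : V → V) (a : V → EuclideanSpace ℝ (Fin D))
    (μ : Fin k → EuclideanSpace ℝ (Fin D)) (lf lb : ℝ) (v : V) (i : Fin k) : EReal :=
  sInf {x : EReal | ∃ S : Fin k → Finset V,
    (∀ w, w ∈ subtree p v ↔ ∃ t, w ∈ S t) ∧
    (∀ s t, s ≠ t → Disjoint (S s) (S t)) ∧
    v ∈ S i ∧
    x = ((qCost (subtreeEdges r p v) a S μ lf lb : ℝ) : EReal)}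

/-- `ℓ[v, i] = min_{j < i} c[v, j]` (equal to `∞` when `i` is the first index). -/
noncomputable def lVal {V : Type*} [Fintype V] [DecidableEq V] {D k : ℕ}
    (r : V) (p : V → V) (a : V → EuclideanSpace ℝ (Fin D))
    (μ : Fin k → EuclideanSpace ℝ (Fin D)) (lf lb : ℝ) (v : V) (i : Fin k) : EReal :=
  sInf {x : EReal | ∃ j : Fin k, j < i ∧ x = cVal r p a μ lf lb v j}

/-- `u[v, i] = min_{j > i} c[v, j]` (equal to `∞` when `i` is the last index). -/
noncomputable def uVal {V : Type*} [Fintype V] [DecidableEq V] {D k : ℕ}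
    (r : V) (p : V → V) (a : V → EuclideanSpace ℝ (Fin D))
    (μ : Fin k → EuclideanSpace ℝ (Fin D)) (lf lb : ℝ) (v : V) (i : Fin k) : EReal :=
  sInf {x : EReal | ∃ j : Fin k, i < j ∧ x = cVal r p a μ lf lb v j}

/-! ### Subtrees of the arborescence -/

section Tree

variable {V : Type*} [Fintype V] [DecidableEq V] {r : V} {p : V → V}

lemma mem_subtree {v w : V} : w ∈ subtree p v ↔ ∃ n : ℕ, p^[n] w = v := by
  simp [subtree]

lemma self_mem_subtree (v : V) : v ∈ subtree p v := mem_subtree.2 ⟨0, rfl⟩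

lemma mem_children {v w : V} : w ∈ children r p v ↔ w ≠ r ∧ p w = v := by
  simp [children]

/-- The parent map has no cycle except the loop at the root. -/
lemma no_cycle {depth : V → ℕ} (hpr : p r = r)
    (hdepth : ∀ w, w ≠ r → depth w = depth (p w) + 1) {w : V} (hw : w ≠ r) (n : ℕ) :
    p^[n] (p w) ≠ w := by
  intro h
  have hle : ∀ n x, depth (p^[n] x) ≤ depth x := by
    intro n
    induction n with
    | zero => intro x; rfl
    | succ n ih =>
      intro x
      rw [Function.iterate_succ_apply]
      refine (ih _).trans ?_
      by_cases hx : x = r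
      · rw [hx, hpr]
      · have := hdepth x hx; omega
  have h1 := hle n (p w)
  rw [h] at h1
  have h2 := hdepth w hw
  omega

lemma ne_root_of_mem_erase (hpr : p r = r) {v x : V} (hx : x ∈ (subtree p v).erase v) :
    x ≠ r := by
  rintro rfl
  obtain ⟨hne, hx⟩ := mem_erase.1 hx
  obtain ⟨n, hn⟩ := mem_subtree.1 hx
  exact hne ((Function.iterate_fixed hpr n).symm.trans hn)

lemma parent_mem_of_mem_erase {v x : V} (hx : x ∈ (subtree p v).erase v) :
    p x ∈ subtree p v := by
  obtain ⟨hne, hx⟩ := mem_erase.1 hx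
  obtain ⟨n, hn⟩ := mem_subtree.1 hx
  cases n with
  | zero => exact absurd hn hne
  | succ n => exact mem_subtree.2 ⟨n, hn⟩

/-- Each edge of `G_v` is determined by its head, which is any vertex of `G_v` other than `v`. -/
lemma subtreeEdges_eq {depth : V → ℕ} (hpr : p r = r)
    (hdepth : ∀ w, w ≠ r → depth w = depth (p w) + 1) (v : V) :
    subtreeEdges r p v = ((subtree p v).erase v).image (fun x => (p x, x)) := by
  ext ⟨y, x⟩
  simp only [subtreeEdges, treeEdges, mem_filter, mem_image, mem_univ, true_and, Prod.mk.injEq]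
  constructor
  · rintro ⟨⟨x', hx', rfl, rfl⟩, h1, h2⟩
    refine ⟨x', mem_erase.2 ⟨?_, h2⟩, rfl, rfl⟩
    rintro rfl
    obtain ⟨n, hn⟩ := mem_subtree.1 h1
    exact no_cycle hpr hdepth hx' n hn
  · rintro ⟨x', hx', rfl, rfl⟩
    exact ⟨⟨x', ne_root_of_mem_erase hpr hx', rfl, rfl⟩, parent_mem_of_mem_erase hx',
      mem_of_mem_erase hx'⟩

lemma subtree_subset_of_child {v w : V} (hw : w ∈ children r p v) :
    subtree p w ⊆ subtree p v := by
  intro x hx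
  obtain ⟨n, hn⟩ := mem_subtree.1 hx
  refine mem_subtree.2 ⟨n + 1, ?_⟩
  rw [Function.iterate_succ_apply', hn]
  exact (mem_children.1 hw).2

lemma self_notMem_subtree_child {depth : V → ℕ} (hpr : p r = r)
    (hdepth : ∀ w, w ≠ r → depth w = depth (p w) + 1) {v w : V} (hw : w ∈ children r p v) :
    v ∉ subtree p w := by
  intro h
  obtain ⟨n, hn⟩ := mem_subtree.1 h
  obtain ⟨hwr, rfl⟩ := mem_children.1 hw
  exact no_cycle hpr hdepth hwr n hn

lemma erase_subtree_eq {depth : V → ℕ} (hpr : p r = r)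
    (hdepth : ∀ w, w ≠ r → depth w = depth (p w) + 1) (v : V) :
    (subtree p v).erase v = (children r p v).biUnion (subtree p) := by
  ext x
  rw [mem_biUnion]
  constructor
  · intro hx
    obtain ⟨hne, hx'⟩ := mem_erase.1 hx
    obtain ⟨n, hn⟩ := mem_subtree.1 hx'
    induction n generalizing x with
    | zero => exact absurd hn hne
    | succ n ih =>
      by_cases hpx : p x = v
      · exact ⟨x, mem_children.2 ⟨ne_root_of_mem_erase hpr hx, hpx⟩, self_mem_subtree x⟩
      · have hp := parent_mem_of_mem_erase hx
        obtain ⟨w, hw, hxw⟩ := ih (p x) (mem_erase.2 ⟨hpx, hp⟩) hpx hp hn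
        obtain ⟨m, hm⟩ := mem_subtree.1 hxw
        exact ⟨w, hw, mem_subtree.2 ⟨m + 1, hm⟩⟩
  · rintro ⟨w, hw, hx⟩
    refine mem_erase.2 ⟨?_, subtree_subset_of_child hw hx⟩
    rintro rfl
    exact self_notMem_subtree_child hpr hdepth hw hx

lemma child_eq_of_mem {depth : V → ℕ} (hpr : p r = r)
    (hdepth : ∀ w, w ≠ r → depth w = depth (p w) + 1) {v w₁ w₂ x : V}
    (h₁ : w₁ ∈ children r p v) (h₂ : w₂ ∈ children r p v)
    (hx₁ : x ∈ subtree p w₁) (hx₂ : x ∈ subtree p w₂) : w₁ = w₂ := by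
  obtain ⟨n, hn⟩ := mem_subtree.1 hx₁
  obtain ⟨m, hm⟩ := mem_subtree.1 hx₂
  wlog hle : n ≤ m generalizing n m w₁ w₂
  · exact (this h₂ h₁ hx₂ hx₁ m hm n hn (by omega)).symm
  obtain ⟨d, rfl⟩ := Nat.exists_eq_add_of_le hle
  rw [add_comm, Function.iterate_add_apply, hn] at hm
  cases d with
  | zero => exact hm
  | succ d =>
    -- `w₁` and `w₂` have the same parent `v`, so `w₂` would be a proper ancestor of itself.
    rw [Function.iterate_succ_apply, (mem_children.1 h₁).2, ← (mem_children.1 h₂).2] at hm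
    exact absurd hm (no_cycle hpr hdepth (mem_children.1 h₂).1 d)

lemma pairwiseDisjoint_subtree {depth : V → ℕ} (hpr : p r = r)
    (hdepth : ∀ w, w ≠ r → depth w = depth (p w) + 1) (v : V) :
    Set.PairwiseDisjoint (↑(children r p v) : Set V) (subtree p) := by
  intro w₁ h₁ w₂ h₂ hne
  refine disjoint_left.2 fun x hx₁ hx₂ => hne ?_
  exact child_eq_of_mem hpr hdepth (mem_coe.1 h₁) (mem_coe.1 h₂) hx₁ hx₂

/-- Labellings of the subtrees of the children of `v` can be prescribed independently, together
with the label of `v`. -/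
lemma exists_glue {depth : V → ℕ} (hpr : p r = r)
    (hdepth : ∀ w, w ≠ r → depth w = depth (p w) + 1) {K : Type*} (v : V) (i : K)
    (g : V → V → K) :
    ∃ f : V → K, f v = i ∧ ∀ w ∈ children r p v, ∀ x ∈ subtree p w, f x = g w x := by
  classical
  refine ⟨fun x => if h : ∃ w ∈ children r p v, x ∈ subtree p w then g h.choose x else i, ?_, ?_⟩
  · refine dif_neg ?_
    rintro ⟨w, hw, hv⟩
    exact self_notMem_subtree_child hpr hdepth hw hv
  · intro w hw x hx
    have h : ∃ w ∈ children r p v, x ∈ subtree p w := ⟨w, hw, hx⟩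
    have hc : h.choose = w :=
      child_eq_of_mem hpr hdepth h.choose_spec.1 hw h.choose_spec.2 hx
    simp only [dif_pos h, hc]

end Tree

/-! ### Labellings and their cost -/

section Cost

variable {V : Type*} [Fintype V] [DecidableEq V] {D k : ℕ} {r : V} {p : V → V}

/-- The penalty of an edge from a vertex labelled `s` to a vertex labelled `t`. -/
noncomputable def pen (lf lb : ℝ) (s t : Fin k) : ℝ :=
  if s < t then lf else if t < s then lb else 0

/-- The cost of a labelling `f` on `G_v`. The edges of `G_v` are indexed by their heads, so only
the values of `f` on `subtree p v` matter. -/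
noncomputable def labCost (p : V → V) (a : V → EuclideanSpace ℝ (Fin D))
    (μ : Fin k → EuclideanSpace ℝ (Fin D)) (lf lb : ℝ) (f : V → Fin k) (v : V) : ℝ :=
  ∑ x ∈ subtree p v, ‖a x - μ (f x)‖ ^ 2 +
    ∑ x ∈ (subtree p v).erase v, pen lf lb (f (p x)) (f x)

lemma labCost_congr (a : V → EuclideanSpace ℝ (Fin D))
    (μ : Fin k → EuclideanSpace ℝ (Fin D)) (lf lb : ℝ) {f g : V → Fin k} {v : V}
    (h : ∀ x ∈ subtree p v, f x = g x) :
    labCost p a μ lf lb f v = labCost p a μ lf lb g v := by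
  unfold labCost
  congr 1
  · exact sum_congr rfl fun x hx => by rw [h x hx]
  · exact sum_congr rfl fun x hx => by
      rw [h x (mem_of_mem_erase hx), h _ (parent_mem_of_mem_erase hx)]

lemma labCost_split {depth : V → ℕ} (hpr : p r = r)
    (hdepth : ∀ w, w ≠ r → depth w = depth (p w) + 1) (a : V → EuclideanSpace ℝ (Fin D))
    (μ : Fin k → EuclideanSpace ℝ (Fin D)) (lf lb : ℝ) (f : V → Fin k) (v : V) :
    labCost p a μ lf lb f v = ‖a v - μ (f v)‖ ^ 2 +
      ∑ w ∈ children r p v, (pen lf lb (f v) (f w) + labCost p a μ lf lb f w) := by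
  have hd := pairwiseDisjoint_subtree hpr hdepth v
  have hE : ∑ w ∈ children r p v, ∑ x ∈ subtree p w, pen lf lb (f (p x)) (f x) =
      ∑ w ∈ children r p v, (pen lf lb (f v) (f w) +
        ∑ x ∈ (subtree p w).erase w, pen lf lb (f (p x)) (f x)) :=
    sum_congr rfl fun w hw => by
      rw [← add_sum_erase _ _ (self_mem_subtree w), (mem_children.1 hw).2]
  unfold labCost
  rw [← add_sum_erase _ _ (self_mem_subtree v), erase_subtree_eq hpr hdepth v, sum_biUnion hd,
    sum_biUnion hd, hE, add_assoc, ← sum_add_distrib]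
  congr 1
  exact sum_congr rfl fun w _ => by ring

lemma sum_pen (lf lb : ℝ) (s t : Fin k) :
    (∑ i : Fin k, ∑ j : Fin k, if i < j then
      lf * (if s = i ∧ t = j then (1 : ℝ) else 0) + lb * (if s = j ∧ t = i then (1 : ℝ) else 0)
      else 0) = pen lf lb s t := by
  have h1 : ∀ i j : Fin k, (if i < j then
      lf * (if s = i ∧ t = j then (1 : ℝ) else 0) + lb * (if s = j ∧ t = i then (1 : ℝ) else 0)
      else 0) = (if s = i then if t = j then (if i < j then lf else 0) else 0 else 0)
        + (if t = i then if s = j then (if i < j then lb else 0) else 0 else 0) := by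
    intro i j
    grind
  simp only [h1, sum_add_distrib, pen]
  have h2 : ∀ (c : ℝ) (s t : Fin k), (∑ i : Fin k, ∑ j : Fin k,
      if s = i then if t = j then (if i < j then c else 0) else 0 else 0) =
      if s < t then c else 0 := by
    intro c s t
    rw [sum_eq_single s (fun b _ hb => by simp [hb.symm]) (by simp)]
    simp
  rw [h2, h2]
  split_ifs with h h'
  · exact absurd h' h.asymm
  all_goals simp

/-- The partition cost on `G_v` is the labelling cost of any labelling compatible with the
partition. -/
lemma qCost_eq_labCost {depth : V → ℕ} (hpr : p r = r)
    (hdepth : ∀ w, w ≠ r → depth w = depth (p w) + 1) (a : V → EuclideanSpace ℝ (Fin D))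
    (μ : Fin k → EuclideanSpace ℝ (Fin D)) (lf lb : ℝ) (f : V → Fin k) (v : V)
    (S : Fin k → Finset V) (hS : ∀ t w, w ∈ S t ↔ w ∈ subtree p v ∧ f w = t) :
    qCost (subtreeEdges r p v) a S μ lf lb = labCost p a μ lf lb f v := by
  have hcard : ∀ i j : Fin k,
      (((subtreeEdges r p v).filter (fun e => e.1 ∈ S i ∧ e.2 ∈ S j)).card : ℝ) =
      ∑ x ∈ (subtree p v).erase v, if f (p x) = i ∧ f x = j then (1 : ℝ) else 0 := by
    intro i j
    rw [subtreeEdges_eq hpr hdepth, card_filter, Nat.cast_sum, sum_image]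
    · refine sum_congr rfl fun x hx => ?_
      simp [hS, mem_of_mem_erase hx, parent_mem_of_mem_erase hx]
    · intro x _ y _ h
      exact (Prod.mk.inj h).2
  unfold qCost labCost
  congr 1
  · rw [← sum_fiberwise (subtree p v) f]
    refine sum_congr rfl fun t _ => ?_
    have : S t = (subtree p v).filter (fun x => f x = t) := by
      ext w; simp [hS]
    rw [this]
    exact sum_congr rfl fun x hx => by rw [(mem_filter.1 hx).2]
  · simp only [hcard]
    simp only [← sum_pen lf lb]
    conv_rhs => rw [sum_comm]
    refine sum_congr rfl fun i _ => ?_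
    conv_rhs => rw [sum_comm]
    refine sum_congr rfl fun j _ => ?_
    split_ifs
    · rw [mul_sum, mul_sum, ← sum_add_distrib]
    · simp

/-! ### Minimisation over labellings -/

/-- `c[v, i]` is an infimum over labellings of all of `V`; the values outside `G_v` do not
matter. -/
lemma cVal_eq {depth : V → ℕ} (hpr : p r = r)
    (hdepth : ∀ w, w ≠ r → depth w = depth (p w) + 1) (a : V → EuclideanSpace ℝ (Fin D))
    (μ : Fin k → EuclideanSpace ℝ (Fin D)) (lf lb : ℝ) (v : V) (i : Fin k) :
    cVal r p a μ lf lb v i = sInf ((fun f : V → Fin k =>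
      ((labCost p a μ lf lb f v : ℝ) : EReal)) '' {f | f v = i}) := by
  unfold cVal
  congr 1
  ext y
  constructor
  · rintro ⟨S, hcov, hdis, hv, rfl⟩
    have hex : ∀ w, ∃ t, w ∈ subtree p v → w ∈ S t := by
      intro w
      by_cases hw : w ∈ subtree p v
      · obtain ⟨t, ht⟩ := (hcov w).1 hw
        exact ⟨t, fun _ => ht⟩
      · exact ⟨i, fun h => absurd h hw⟩
    choose f hf using hex
    have huniq : ∀ {w s t}, w ∈ S s → w ∈ S t → s = t := by
      intro w s t hs ht
      by_contra hne
      exact disjoint_left.1 (hdis s t hne) hs ht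
    refine ⟨f, huniq (hf v (self_mem_subtree v)) hv, ?_⟩
    rw [qCost_eq_labCost hpr hdepth a μ lf lb f v S]
    intro t w
    constructor
    · intro h
      have hw := (hcov w).2 ⟨t, h⟩
      exact ⟨hw, huniq (hf w hw) h⟩
    · rintro ⟨hw, rfl⟩
      exact hf w hw
  · rintro ⟨f, hf, rfl⟩
    refine ⟨fun t => (subtree p v).filter (fun x => f x = t), by simp, ?_, ?_, ?_⟩
    · intro s t hst
      refine disjoint_left.2 fun x hs ht => hst ?_
      rw [← (mem_filter.1 hs).2, (mem_filter.1 ht).2]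
    · exact mem_filter.2 ⟨self_mem_subtree v, hf⟩
    · rw [qCost_eq_labCost hpr hdepth a μ lf lb f v _ (by simp)]

lemma cVal_le {depth : V → ℕ} (hpr : p r = r)
    (hdepth : ∀ w, w ≠ r → depth w = depth (p w) + 1) (a : V → EuclideanSpace ℝ (Fin D))
    (μ : Fin k → EuclideanSpace ℝ (Fin D)) (lf lb : ℝ) (v : V) (f : V → Fin k) :
    cVal r p a μ lf lb v (f v) ≤ ((labCost p a μ lf lb f v : ℝ) : EReal) := by
  rw [cVal_eq hpr hdepth]
  exact sInf_le ⟨f, rfl, rfl⟩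

lemma exists_cVal {depth : V → ℕ} (hpr : p r = r)
    (hdepth : ∀ w, w ≠ r → depth w = depth (p w) + 1) (a : V → EuclideanSpace ℝ (Fin D))
    (μ : Fin k → EuclideanSpace ℝ (Fin D)) (lf lb : ℝ) (v : V) (i : Fin k) :
    ∃ f : V → Fin k, f v = i ∧
      cVal r p a μ lf lb v i = ((labCost p a μ lf lb f v : ℝ) : EReal) := by
  rw [cVal_eq hpr hdepth]
  obtain ⟨f, hf, h⟩ := Set.Nonempty.csInf_mem (s := (fun f : V → Fin k =>
      ((labCost p a μ lf lb f v : ℝ) : EReal)) '' {f | f v = i})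
    (Set.Nonempty.image _ ⟨fun _ => i, rfl⟩) (Set.toFinite _)
  exact ⟨f, hf, h.symm⟩

/-- The three-way minimum at a child `w` of a vertex labelled `i` is a lower bound for the
contribution of `w` under any labelling. -/
lemma step_le {depth : V → ℕ} (hpr : p r = r)
    (hdepth : ∀ w, w ≠ r → depth w = depth (p w) + 1) (a : V → EuclideanSpace ℝ (Fin D))
    (μ : Fin k → EuclideanSpace ℝ (Fin D)) (lf lb : ℝ) (w : V) (i : Fin k) (f : V → Fin k) :
    min (cVal r p a μ lf lb w i)
      (min (((lf : ℝ) : EReal) + uVal r p a μ lf lb w i)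
        (((lb : ℝ) : EReal) + lVal r p a μ lf lb w i)) ≤
      ((pen lf lb i (f w) + labCost p a μ lf lb f w : ℝ) : EReal) := by
  have hc := cVal_le hpr hdepth a μ lf lb w f
  rw [EReal.coe_add]
  rcases lt_trichotomy i (f w) with h | h | h
  · rw [pen, if_pos h]
    refine (min_le_right _ _).trans ((min_le_left _ _).trans (add_le_add le_rfl ?_))
    refine le_trans (sInf_le ?_) hc
    exact ⟨f w, h, rfl⟩
  · refine (min_le_left _ _).trans ?_
    simpa [pen, h] using hc
  · rw [pen, if_neg h.asymm, if_pos h]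
    refine (min_le_right _ _).trans ((min_le_right _ _).trans (add_le_add le_rfl ?_))
    refine le_trans (sInf_le ?_) hc
    exact ⟨f w, h, rfl⟩

/-- Some labelling brings the contribution of `w` down to the three-way minimum. -/
lemma exists_step {depth : V → ℕ} (hpr : p r = r)
    (hdepth : ∀ w, w ≠ r → depth w = depth (p w) + 1) (a : V → EuclideanSpace ℝ (Fin D))
    (μ : Fin k → EuclideanSpace ℝ (Fin D)) (lf lb : ℝ) (w : V) (i : Fin k) :
    ∃ f : V → Fin k, ((pen lf lb i (f w) + labCost p a μ lf lb f w : ℝ) : EReal) ≤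
      min (cVal r p a μ lf lb w i)
        (min (((lf : ℝ) : EReal) + uVal r p a μ lf lb w i)
          (((lb : ℝ) : EReal) + lVal r p a μ lf lb w i)) := by
  -- A labelling minimising the contribution of `w` works: each of the three entries is either
  -- infinite or the contribution of some labelling.
  have : Nonempty (V → Fin k) := ⟨fun _ => i⟩
  obtain ⟨f, hf⟩ := Finite.exists_min
    (fun f : V → Fin k => pen lf lb i (f w) + labCost p a μ lf lb f w)
  have key : ∀ j, ((pen lf lb i (f w) + labCost p a μ lf lb f w : ℝ) : EReal) ≤
      ((pen lf lb i j : ℝ) : EReal) + cVal r p a μ lf lb w j := by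
    intro j
    obtain ⟨g, rfl, hg⟩ := exists_cVal hpr hdepth a μ lf lb w j
    rw [hg, ← EReal.coe_add]
    exact EReal.coe_le_coe (hf g)
  have attained : ∀ P : Fin k → Prop,
      sInf {x : EReal | ∃ j : Fin k, P j ∧ x = cVal r p a μ lf lb w j} = ⊤ ∨
      ∃ j, P j ∧ sInf {x : EReal | ∃ j : Fin k, P j ∧ x = cVal r p a μ lf lb w j} =
        cVal r p a μ lf lb w j := by
    intro P
    rcases Set.eq_empty_or_nonempty
      {x : EReal | ∃ j : Fin k, P j ∧ x = cVal r p a μ lf lb w j} with h | h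
    · left
      rw [h, sInf_empty]
    · right
      refine h.csInf_mem ((Set.finite_range (cVal r p a μ lf lb w)).subset ?_)
      rintro _ ⟨j, _, rfl⟩
      exact ⟨j, rfl⟩
  refine ⟨f, le_min ?_ (le_min ?_ ?_)⟩
  · simpa [pen] using key i
  · unfold uVal
    rcases attained (fun j => i < j) with h | ⟨j, hj, h⟩
    · rw [h, EReal.coe_add_top]
      exact le_top
    · rw [h]
      have := key j
      rwa [show pen lf lb i j = lf from if_pos hj] at this
  · unfold lVal
    rcases attained (fun j => j < i) with h | ⟨j, hj, h⟩
    · rw [h, EReal.coe_add_top]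
      exact le_top
    · rw [h]
      have := key j
      rwa [show pen lf lb i j = lb from (if_neg hj.asymm).trans (if_pos hj)] at this

lemma coe_labCost_split {depth : V → ℕ} (hpr : p r = r)
    (hdepth : ∀ w, w ≠ r → depth w = depth (p w) + 1) (a : V → EuclideanSpace ℝ (Fin D))
    (μ : Fin k → EuclideanSpace ℝ (Fin D)) (lf lb : ℝ) (f : V → Fin k) (v : V) :
    ((labCost p a μ lf lb f v : ℝ) : EReal) = ((‖a v - μ (f v)‖ ^ 2 : ℝ) : EReal) +
      ∑ w ∈ children r p v,
        ((pen lf lb (f v) (f w) + labCost p a μ lf lb f w : ℝ) : EReal) := by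
  have hsum : ∀ (s : Finset V) (h : V → ℝ),
      ((∑ w ∈ s, h w : ℝ) : EReal) = ∑ w ∈ s, (h w : EReal) := fun s h =>
    map_sum (⟨⟨Real.toEReal, EReal.coe_zero⟩, EReal.coe_add⟩ : ℝ →+ EReal) h s
  rw [labCost_split hpr hdepth, EReal.coe_add, hsum]

end Cost

/-- The dynamic-programming recurrence on an arborescence:
`c[v, i] = ‖a(v) − μ_i‖² + ∑_{w child of v} min(c[w, i], λ_f + u[w, i], λ_b + ℓ[w, i])`. -/
theorem cVal_recurrence {V : Type*} [Fintype V] [DecidableEq V] {D k : ℕ}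
    (r : V) (p : V → V) (depth : V → ℕ)
    (hpr : p r = r) (hdepth : ∀ w, w ≠ r → depth w = depth (p w) + 1)
    (a : V → EuclideanSpace ℝ (Fin D)) (μ : Fin k → EuclideanSpace ℝ (Fin D))
    (lf lb : ℝ) (hlf : 0 ≤ lf) (hlb : 0 ≤ lb)
    (v : V) (i : Fin k) :
    cVal r p a μ lf lb v i
      = ((‖a v - μ i‖ ^ 2 : ℝ) : EReal)
        + ∑ w ∈ children r p v,
            min (cVal r p a μ lf lb w i)
              (min (((lf : ℝ) : EReal) + uVal r p a μ lf lb w i)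
                   (((lb : ℝ) : EReal) + lVal r p a μ lf lb w i)) := by
  apply le_antisymm
  · choose g hg using fun w => exists_step hpr hdepth a μ lf lb w i
    obtain ⟨f, rfl, hf⟩ := exists_glue hpr hdepth v i g
    refine (cVal_le hpr hdepth a μ lf lb v f).trans ?_
    rw [coe_labCost_split hpr hdepth]
    refine add_le_add le_rfl (sum_le_sum fun w hw => ?_)
    rw [hf w hw w (self_mem_subtree w), labCost_congr a μ lf lb (hf w hw)]
    exact hg w
  · obtain ⟨f, rfl, hf⟩ := exists_cVal hpr hdepth a μ lf lb v i
    rw [hf, coe_labCost_split hpr hdepth]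
    exact add_le_add le_rfl (sum_le_sum fun w _ => step_le hpr hdepth a μ lf lb w (f v) f)
end

section
/- Let G = (V, E) be a finite undirected graph with k distinct terminals t₁, …, t_k ∈ V, and let G′, the features a, the centroids μ₁, …, μ_k, and λ_f = λ_b = 1 be given by the construction: the vertex set of G′ is V ∪ U₁ ∪ ⋯ ∪ U_k with U₁, …, U_k pairwise disjoint sets of new vertices of size |V| each; each undirected edge of E becomes a directed edge in an arbitrary fixed direction; for each u ∈ U_i there is a directed edge between u and t_i; a(t_i) = μ_i and a(u) = μ_i for u ∈ U_i where μ_i ∈ ℝ^k is the i-th standard unit vector, and a(v) = 0 for all other v ∈ V. If 𝒮 = (S₁, …, S_k) is an ordered k-partition of the vertices of G′ minimizing q(𝒮, {μ_i} | 1, 1), then setting C_i = V ∩ S_i yields a partition (C₁, …, C_k) of V with t_i ∈ C_i for each i that minimizes the number of edges of E joining vertices in different parts, over all partitions (C₁′, …, C_k′) of V with t_i ∈ C_i′ for each i (i.e., (C₁, …, C_k) is an optimal unweighted multiterminal cut of G). -/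
/-!
The cost of a partition of the constructed graph splits exactly. Write the partition as a labelling
`f` of the vertices of `G′`. Every non-terminal vertex of `V` is at squared distance `1` from every
centroid, so these vertices contribute a constant; the oriented edges of `G` contribute the cut
value of `f` on `V`; and the `i`-th terminal together with its new vertices `U_i` contributes a
"star" term `starCost` depending only on their labels (`labelCost_eq`).

The star term vanishes when `t_i` and all of `U_i` have label `i`. If `t_i` has a label other than
`i`, it is at least `2 + |V|`: the terminal itself pays `2`, and each vertex of `U_i` pays at
least `1`, for its cut edge to `t_i` if it has label `i` and for its distance to the wrong centroid
otherwise (`le_starCost_of_ne`). Moving `t_i` and `U_i` to part `i` leaves all other star terms unchanged and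
raises the cut value by at most the degree of `t_i`, hence by at most `|V|`
(`cutLabel_update_le`). So a minimizer puts every terminal in its own part. For such a labelling
the cost is at least the constant plus the cut value, and any terminal-respecting partition of `V`,
extended by sending `U_i` to part `i`, attains the constant plus its cut value; so the minimizer
restricts to a minimum multiterminal cut.
-/

open Finset

/-- The number of (undirected) edges of `G` — represented once each by the orientation
`orient` — whose endpoints lie in different parts of the partition `C`. -/
def multiCutCount {V : Type*} [DecidableEq V] {k : ℕ}
    (orient : Finset (V × V)) (C : Fin k → Finset V) : ℕ :=
  (orient.filter (fun e => ¬ ∃ i, e.1 ∈ C i ∧ e.2 ∈ C i)).card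

/-! ### The cost of a labelling -/

/-- The squared distance between two standard unit vectors. -/
lemma norm_single_sub_single_sq {k : ℕ} (i j : Fin k) :
    ‖(EuclideanSpace.single i (1 : ℝ) : EuclideanSpace ℝ (Fin k)) - EuclideanSpace.single j 1‖ ^ 2
      = if j ≠ i then 2 else 0 := by
  rw [norm_sub_sq_real]
  by_cases h : j = i
  · subst h; simp; norm_num
  · have h0 : inner ℝ (EuclideanSpace.single i (1 : ℝ) : EuclideanSpace ℝ (Fin k))
        (EuclideanSpace.single j 1) = 0 := by
      simp [EuclideanSpace.inner_single_left, Ne.symm h]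
    simp [h, h0]; norm_num

/-- For labels `x`, `y`, exactly one ordered pair `i < j` is hit, in one of the two directions,
when `x ≠ y`, and none otherwise. -/
lemma sum_lt_pairs {k : ℕ} (x y : Fin k) :
    (∑ i : Fin k, ∑ j : Fin k, if i < j then
      ((if x = i ∧ y = j then (1 : ℝ) else 0) + (if x = j ∧ y = i then (1 : ℝ) else 0)) else 0)
      = if x ≠ y then 1 else 0 := by
  have h1 : ∀ i j : Fin k, (if i < j then
      ((if x = i ∧ y = j then (1 : ℝ) else 0) + (if x = j ∧ y = i then (1 : ℝ) else 0)) else 0)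
      = (if x = i then (if y = j then (if x < y then 1 else 0) else 0) else 0)
        + (if y = i then (if x = j then (if y < x then 1 else 0) else 0) else 0) := by
    intro i j
    split_ifs <;> grind
  simp only [h1, Finset.sum_add_distrib]
  have h2 : ∀ (u v : Fin k) (c : ℝ),
      (∑ i : Fin k, ∑ j : Fin k, if u = i then (if v = j then c else 0) else 0) = c := by
    intro u v c
    rw [Finset.sum_eq_single u]
    · simp
    · intro b _ hb
      simp [Ne.symm hb]
    · simp
  rw [h2, h2]
  rcases lt_trichotomy x y with h | h | h
  · simp [h, h.ne, h.le]
  · simp [h]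
  · simp [h, h.ne', h.le]

/-- The cost `q(·, {μ_i} | 1, 1)` of the partition into the fibres of a labelling `f`: the squared
distances to the centroids plus the number of edges whose ends have different labels. -/
lemma qCost_eq_of_label {W : Type*} [Fintype W] [DecidableEq W] {D k : ℕ}
    (E : Finset (W × W)) (a : W → EuclideanSpace ℝ (Fin D))
    (S : Fin k → Finset W) (μ : Fin k → EuclideanSpace ℝ (Fin D)) (f : W → Fin k)
    (hf : ∀ x i, x ∈ S i ↔ f x = i) :
    qCost E a S μ 1 1 = (∑ x, ‖a x - μ (f x)‖ ^ 2)
      + ∑ e ∈ E, if f e.1 ≠ f e.2 then (1 : ℝ) else 0 := by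
  unfold qCost
  congr 1
  · rw [← Finset.sum_fiberwise (s := Finset.univ) (g := f)]
    refine Finset.sum_congr rfl fun i _ => ?_
    have : S i = Finset.univ.filter (fun x => f x = i) := by ext x; simp [hf]
    rw [this]
    refine Finset.sum_congr rfl fun x hx => ?_
    rw [(Finset.mem_filter.1 hx).2]
  · simp only [hf, one_mul, Finset.card_filter, Nat.cast_sum, Nat.cast_ite, Nat.cast_one,
      Nat.cast_zero, ← sum_lt_pairs]
    rw [Finset.sum_comm (s := E)]
    refine Finset.sum_congr rfl fun i _ => ?_
    rw [Finset.sum_comm (s := E)]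
    refine Finset.sum_congr rfl fun j _ => ?_
    split_ifs
    · rw [Finset.sum_add_distrib]
    · simp

/-! ### Cut value and star terms -/

/-- The number of oriented edges cut by a labelling `g`, as a real number. -/
noncomputable def cutLabel {V : Type*} {k : ℕ} (orient : Finset (V × V)) (g : V → Fin k) : ℝ :=
  ∑ e ∈ orient, if g e.1 ≠ g e.2 then 1 else 0

/-- The contribution to the cost of the `i`-th terminal and its new vertices `U_i`, when the
terminal has label `c` and the vertices of `U_i` have labels `h`: a misplaced vertex of either kind
pays `2`, and a vertex of `U_i` pays `1` more when its edge to the terminal is cut. -/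
noncomputable def starCost {k n : ℕ} (i c : Fin k) (h : Fin n → Fin k) : ℝ :=
  (if c ≠ i then 2 else 0) +
    ∑ m, ((if h m ≠ i then (2 : ℝ) else 0) + (if c ≠ h m then 1 else 0))

lemma starCost_nonneg {k n : ℕ} (i c : Fin k) (h : Fin n → Fin k) : 0 ≤ starCost i c h := by
  unfold starCost
  positivity

lemma starCost_self {k n : ℕ} (i : Fin k) : starCost i i (fun _ : Fin n => i) = 0 := by
  simp [starCost]

/-- A misplaced terminal costs at least `2`, plus `1` for each vertex of `U_i`. -/
lemma le_starCost_of_ne {k n : ℕ} {i c : Fin k} (hc : c ≠ i) (h : Fin n → Fin k) :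
    2 + (n : ℝ) ≤ starCost i c h := by
  unfold starCost
  rw [if_pos hc]
  gcongr
  calc (n : ℝ) = ∑ _m : Fin n, (1 : ℝ) := by simp
    _ ≤ _ := Finset.sum_le_sum fun m _ => by
      by_cases h1 : h m = i
      · have : c ≠ h m := by rw [h1]; exact hc
        simp [h1, hc]
      · rw [if_pos h1]
        split_ifs <;> norm_num

/-- `multiCutCount` of the partition into the fibres of a labelling. -/
lemma multiCutCount_eq {V : Type*} [DecidableEq V] {k : ℕ}
    (orient : Finset (V × V)) (C : Fin k → Finset V) (g : V → Fin k)
    (hg : ∀ v i, v ∈ C i ↔ g v = i) : (multiCutCount orient C : ℝ) = cutLabel orient g := by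
  unfold multiCutCount cutLabel
  rw [Finset.card_filter]
  push_cast
  refine Finset.sum_congr rfl fun e _ => ?_
  simp [hg, eq_comm]

/-- Relabelling one vertex raises the cut value by at most its degree, hence by at most the number
of vertices. -/
lemma cutLabel_update_le {V : Type*} [Fintype V] [DecidableEq V] {k : ℕ}
    (orient : Finset (V × V)) (hone : ∀ v w : V, ¬((v, w) ∈ orient ∧ (w, v) ∈ orient))
    (g : V → Fin k) (s : V) (i : Fin k) :
    cutLabel orient (Function.update g s i) ≤ cutLabel orient g + Fintype.card V := by
  have hcard : ((orient.filter (fun e => e.1 = s ∨ e.2 = s)).card : ℝ) ≤ Fintype.card V := by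
    -- An edge at `s` is determined by its other end, as no edge is present in both directions.
    have : (orient.filter (fun e => e.1 = s ∨ e.2 = s)).card ≤ (Finset.univ : Finset V).card := by
      refine Finset.card_le_card_of_injOn (fun e => if e.1 = s then e.2 else e.1)
        (fun _ _ => Finset.mem_coe.2 (Finset.mem_univ _)) ?_
      rintro ⟨x, y⟩ h1 ⟨z, w⟩ h2 h
      simp only [Finset.coe_filter, Set.mem_ofPred_eq] at h1 h2 h
      have := hone x y
      split_ifs at h <;> grind
    exact_mod_cast this
  rw [Finset.card_filter] at hcard
  push_cast at hcard
  refine le_trans ?_ (add_le_add_right hcard _)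
  unfold cutLabel
  rw [← Finset.sum_add_distrib]
  refine Finset.sum_le_sum fun e _ => ?_
  by_cases h : e.1 = s ∨ e.2 = s
  · rw [if_pos h]
    split_ifs <;> norm_num
  · rw [if_neg h, add_zero]
    push Not at h
    rw [Function.update_of_ne h.1, Function.update_of_ne h.2]

/-! ### Splitting the cost on the constructed graph -/

/-- The cost of a labelling of the constructed graph: a constant for the non-terminals, the cut
value on `G`, and one star term for each terminal. -/
lemma labelCost_eq {V : Type*} [Fintype V] [DecidableEq V] {k n : ℕ}
    (t : Fin k → V) (htinj : Function.Injective t)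
    (orient : Finset (V × V)) (dir : Fin k × Fin n → Bool)
    (a : (V ⊕ (Fin k × Fin n)) → EuclideanSpace ℝ (Fin k))
    (hat : ∀ i : Fin k, a (Sum.inl (t i)) = EuclideanSpace.single i 1)
    (hanon : ∀ v : V, (∀ i : Fin k, v ≠ t i) → a (Sum.inl v) = 0)
    (haU : ∀ u : Fin k × Fin n, a (Sum.inr u) = EuclideanSpace.single u.1 1)
    (μ : Fin k → EuclideanSpace ℝ (Fin k))
    (hμ : ∀ i, μ i = EuclideanSpace.single i 1)
    (f : V ⊕ (Fin k × Fin n) → Fin k) :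
    (∑ x, ‖a x - μ (f x)‖ ^ 2)
      + (∑ e ∈ orient.image (fun e => ((Sum.inl e.1 : V ⊕ (Fin k × Fin n)),
            (Sum.inl e.2 : V ⊕ (Fin k × Fin n)))) ∪
          Finset.univ.image (fun u : Fin k × Fin n =>
          if dir u then (Sum.inl (t u.1), Sum.inr u) else (Sum.inr u, Sum.inl (t u.1))),
          if f e.1 ≠ f e.2 then (1 : ℝ) else 0)
      = ((Finset.univ.image t)ᶜ.card : ℝ) + cutLabel orient (fun v => f (Sum.inl v))
        + ∑ i, starCost i (f (Sum.inl (t i))) (fun m => f (Sum.inr (i, m))) := by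
  have hV : ∑ v : V, ‖a (Sum.inl v) - μ (f (Sum.inl v))‖ ^ 2 =
      ((Finset.univ.image t)ᶜ.card : ℝ) + ∑ i, if f (Sum.inl (t i)) ≠ i then (2 : ℝ) else 0 := by
    rw [← Finset.sum_compl_add_sum (Finset.univ.image t),
      Finset.sum_image (fun _ _ _ _ h => htinj h)]
    congr 1
    · rw [Finset.cast_card]
      refine Finset.sum_congr rfl fun v hv => ?_
      rw [hanon v (fun i h => by simp [h] at hv), hμ]
      simp
    · refine Finset.sum_congr rfl fun i _ => ?_
      rw [hat, hμ, norm_single_sub_single_sq]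
  have hU : ∑ u : Fin k × Fin n, ‖a (Sum.inr u) - μ (f (Sum.inr u))‖ ^ 2 =
      ∑ i, ∑ m, if f (Sum.inr (i, m)) ≠ i then (2 : ℝ) else 0 := by
    rw [Fintype.sum_prod_type]
    simp only [haU, hμ, norm_single_sub_single_sq]
  rw [Fintype.sum_sum_type, hV, hU, Finset.sum_union, Finset.sum_image, Finset.sum_image]
  · have h1 : ∀ u : Fin k × Fin n, (if f (if dir u = true then
          ((Sum.inl (t u.1) : V ⊕ (Fin k × Fin n)), (Sum.inr u : V ⊕ (Fin k × Fin n)))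
          else (Sum.inr u, Sum.inl (t u.1))).1 ≠ f (if dir u = true then
          ((Sum.inl (t u.1) : V ⊕ (Fin k × Fin n)), (Sum.inr u : V ⊕ (Fin k × Fin n)))
          else (Sum.inr u, Sum.inl (t u.1))).2 then (1 : ℝ) else 0)
        = if f (Sum.inl (t u.1)) ≠ f (Sum.inr u) then 1 else 0 := by
      intro u
      cases dir u <;> simp [eq_comm]
    simp only [h1]
    rw [Fintype.sum_prod_type]
    simp only [starCost, cutLabel, Finset.sum_add_distrib]
    ring
  · intro u _ v _ h
    cases hu : dir u <;> cases hv : dir v <;> simp [hu, hv] at h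
    · exact h.1
    · exact h.2
  · rintro ⟨x, y⟩ _ ⟨z, w⟩ _ h
    simpa using h
  · rw [Finset.disjoint_left]
    intro e h1 h2
    obtain ⟨p, -, rfl⟩ := Finset.mem_image.1 h1
    obtain ⟨u, -, hu⟩ := Finset.mem_image.1 h2
    cases hd : dir u <;> simp [hd] at hu

/-- A disjoint cover indexed by `Fin k` is the family of fibres of a labelling. -/
lemma exists_label {W : Type*} [DecidableEq W] {k : ℕ} (S : Fin k → Finset W)
    (hdisj : ∀ i j, i ≠ j → Disjoint (S i) (S j)) (hcover : ∀ x, ∃ i, x ∈ S i) :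
    ∃ f : W → Fin k, ∀ x i, x ∈ S i ↔ f x = i := by
  choose f hf using hcover
  refine ⟨f, fun x i => ⟨fun hx => ?_, fun h => h ▸ hf x⟩⟩
  by_contra hne
  exact Finset.disjoint_left.1 (hdisj _ _ hne) (hf x) hx

/-- In the reduction from unweighted minimum multiterminal cut: if `𝒮 = (S₁, …, S_k)` is an
ordered `k`-partition of the vertices of the constructed graph `G′` minimizing
`q(·, {μ_i} | 1, 1)`, then `C_i = V ∩ S_i` is a partition of `V` with `t_i ∈ C_i` that
minimizes the number of edges of `E` joining vertices in different parts over all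
partitions of `V` separating the terminals, i.e., an optimal unweighted multiterminal
cut of `G`. -/
theorem optimal_partition_gives_multiterminal_cut
    {V : Type*} [Fintype V] [DecidableEq V] {k : ℕ}
    (G : SimpleGraph V) [DecidableRel G.Adj]
    (t : Fin k → V) (htinj : Function.Injective t)
    (orient : Finset (V × V))
    (horient : ∀ v w : V, G.Adj v w ↔ ((v, w) ∈ orient ∨ (w, v) ∈ orient))
    (hone : ∀ v w : V, ¬((v, w) ∈ orient ∧ (w, v) ∈ orient))
    (dir : Fin k × Fin (Fintype.card V) → Bool)
    (E' : Finset ((V ⊕ (Fin k × Fin (Fintype.card V))) × (V ⊕ (Fin k × Fin (Fintype.card V)))))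
    (hE' : E' = orient.image (fun e => (Sum.inl e.1, Sum.inl e.2)) ∪
        Finset.univ.image (fun u : Fin k × Fin (Fintype.card V) =>
          if dir u then (Sum.inl (t u.1), Sum.inr u) else (Sum.inr u, Sum.inl (t u.1))))
    (a : (V ⊕ (Fin k × Fin (Fintype.card V))) → EuclideanSpace ℝ (Fin k))
    (hat : ∀ i : Fin k, a (Sum.inl (t i)) = EuclideanSpace.single i 1)
    (hanon : ∀ v : V, (∀ i : Fin k, v ≠ t i) → a (Sum.inl v) = 0)
    (haU : ∀ u : Fin k × Fin (Fintype.card V), a (Sum.inr u) = EuclideanSpace.single u.1 1)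
    (μ : Fin k → EuclideanSpace ℝ (Fin k))
    (hμ : ∀ i, μ i = EuclideanSpace.single i 1)
    (S : Fin k → Finset (V ⊕ (Fin k × Fin (Fintype.card V))))
    (hdisj : ∀ i j, i ≠ j → Disjoint (S i) (S j))
    (hcover : ∀ x, ∃ i, x ∈ S i)
    (hopt : ∀ S' : Fin k → Finset (V ⊕ (Fin k × Fin (Fintype.card V))),
        (∀ i j, i ≠ j → Disjoint (S' i) (S' j)) → (∀ x, ∃ i, x ∈ S' i) →
        qCost E' a S μ 1 1 ≤ qCost E' a S' μ 1 1)
    (C : Fin k → Finset V)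
    (hC : C = fun i => Finset.univ.filter (fun v => Sum.inl v ∈ S i)) :
    (∀ i j, i ≠ j → Disjoint (C i) (C j)) ∧
    (∀ v : V, ∃ i, v ∈ C i) ∧
    (∀ i, t i ∈ C i) ∧
    (∀ C' : Fin k → Finset V,
      (∀ i j, i ≠ j → Disjoint (C' i) (C' j)) →
      (∀ v : V, ∃ i, v ∈ C' i) →
      (∀ i, t i ∈ C' i) →
      multiCutCount orient C ≤ multiCutCount orient C') := by
  obtain ⟨f, hf⟩ := exists_label S hdisj hcover
  have hCf : ∀ v i, v ∈ C i ↔ f (Sum.inl v) = i := by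
    intro v i
    simp [hC, hf]
  -- Optimality of `S`, with both sides in the split form.
  have key : ∀ f' : V ⊕ (Fin k × Fin (Fintype.card V)) → Fin k,
      cutLabel orient (fun v => f (Sum.inl v))
        + ∑ i, starCost i (f (Sum.inl (t i))) (fun m => f (Sum.inr (i, m)))
      ≤ cutLabel orient (fun v => f' (Sum.inl v))
        + ∑ i, starCost i (f' (Sum.inl (t i))) (fun m => f' (Sum.inr (i, m))) := by
    intro f'
    have h := hopt (fun i => Finset.univ.filter (fun x => f' x = i))
      (fun i j hij => Finset.disjoint_left.2 fun x hx hx' => hij <| by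
        rw [← (Finset.mem_filter.1 hx).2, (Finset.mem_filter.1 hx').2])
      (fun x => ⟨f' x, by simp⟩)
    rw [qCost_eq_of_label E' a S μ f hf,
      qCost_eq_of_label E' a _ μ f' (fun x i => by simp), hE',
      labelCost_eq t htinj orient dir a hat hanon haU μ hμ f,
      labelCost_eq t htinj orient dir a hat hanon haU μ hμ f'] at h
    linarith
  have hterm : ∀ i, f (Sum.inl (t i)) = i := by
    intro i
    by_contra hne
    -- Move `t i` and all of `U_i` to part `i`.
    have h := key (Sum.elim (Function.update (fun v => f (Sum.inl v)) (t i) i)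
      (fun u => if u.1 = i then i else f (Sum.inr u)))
    have hcut := cutLabel_update_le orient hone (fun v => f (Sum.inl v)) (t i) i
    simp only [Sum.elim_inl, Sum.elim_inr] at h
    rw [← Finset.add_sum_erase _ _ (Finset.mem_univ i),
      ← Finset.add_sum_erase _ _ (Finset.mem_univ i)] at h
    have hrest : ∀ j ∈ Finset.univ.erase i,
        starCost j (Function.update (fun v => f (Sum.inl v)) (t i) i (t j))
          (fun m : Fin (Fintype.card V) => if j = i then i else f (Sum.inr (j, m)))
        = starCost j (f (Sum.inl (t j))) (fun m => f (Sum.inr (j, m))) := by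
      intro j hj
      have hji := Finset.ne_of_mem_erase hj
      rw [Function.update_of_ne (fun e => hji (htinj e))]
      simp [hji]
    rw [Finset.sum_congr rfl hrest] at h
    simp only [Function.update_self, if_true, starCost_self] at h
    have := le_starCost_of_ne hne (fun m => f (Sum.inr (i, m)))
    linarith
  refine ⟨fun i j hij => Finset.disjoint_left.2 fun v hv hv' => hij ?_,
    fun v => ⟨f (Sum.inl v), (hCf _ _).2 rfl⟩, fun i => (hCf _ _).2 (hterm i), ?_⟩
  · rw [← (hCf v i).1 hv, (hCf v j).1 hv']
  · intro C' hd' hc' ht'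
    obtain ⟨g, hg⟩ := exists_label C' hd' hc'
    have h := key (Sum.elim g (fun u => u.1))
    simp only [Sum.elim_inl, Sum.elim_inr, fun i => (hg (t i) i).1 (ht' i), starCost_self,
      Finset.sum_const_zero, add_zero] at h
    have h0 : 0 ≤ ∑ i, starCost i (f (Sum.inl (t i))) (fun m => f (Sum.inr (i, m))) :=
      Finset.sum_nonneg fun i _ => starCost_nonneg _ _ _
    have : (multiCutCount orient C : ℝ) ≤ multiCutCount orient C' := by
      rw [multiCutCount_eq orient C _ hCf, multiCutCount_eq orient C' g hg]
      linarith
    exact_mod_cast this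
end
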